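/- Let p ≥ 2 and let g : ℝ^n × ℝ^m → ℝ be p times continuously differentiable with L_p-Lipschitz p-th derivative, and let M ≥ L_p. Fix (x,y) ∈ ℝ^n × ℝ^m and define the regularized Taylor model Ω_{(x,y),p,M}(x̂,ŷ) = Φ_{(x,y),p}(x̂,ŷ) + (M(√2)^{p−1}/(p+1)!)‖x̂ − x‖₂^{p+1} − (M(√2)^{p−1}/(p+1)!)‖ŷ − y‖₂^{p+1}, where Φ_{(x,y),p} is the p-th order Taylor polynomial of g at (x,y). If (x̃,ỹ) is a stationary point of Ω_{(x,y),p,M}, i.e. ∇Ω_{(x,y),p,M}(x̃,ỹ) = 0, then ‖∇g(x̃,ỹ)‖₂² ≤ 2^{p+1} M² (‖x̃ − x‖₂² + ‖ỹ − y‖₂²)^p. -/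

import Mathlib

/-- The point of `ℝⁿ × ℝᵐ` (with the Euclidean/`L²` product structure) with coordinates
`(x, y)`. -/
noncomputable def mkZ {n m : ℕ} (x : EuclideanSpace ℝ (Fin n)) (y : EuclideanSpace ℝ (Fin m)) :
    WithLp 2 (EuclideanSpace ℝ (Fin n) × EuclideanSpace ℝ (Fin m)) :=
  (WithLp.equiv 2 (EuclideanSpace ℝ (Fin n) × EuclideanSpace ℝ (Fin m))).symm (x, y)

/-- The `p`-th order Taylor polynomial `Φ_{z,p}(ẑ) = Σ_{i=0}^p (1/i!) ∇ⁱ g(z)[ẑ − z]ⁱ`. -/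
noncomputable def taylorPoly {n m : ℕ} (p : ℕ)
    (g : WithLp 2 (EuclideanSpace ℝ (Fin n) × EuclideanSpace ℝ (Fin m)) → ℝ)
    (z zh : WithLp 2 (EuclideanSpace ℝ (Fin n) × EuclideanSpace ℝ (Fin m))) : ℝ :=
  ∑ i ∈ Finset.range (p + 1),
    (1 / (Nat.factorial i : ℝ)) * iteratedFDeriv ℝ i g z (fun _ => zh - z)

/-- The regularized Taylor model
`Ω_{(x,y),p,M}(x̂,ŷ) = Φ_{(x,y),p}(x̂,ŷ) + (M(√2)^{p−1}/(p+1)!)‖x̂ − x‖^{p+1}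
− (M(√2)^{p−1}/(p+1)!)‖ŷ − y‖^{p+1}`. -/
noncomputable def omegaModel {n m : ℕ} (p : ℕ) (M : ℝ)
    (g : WithLp 2 (EuclideanSpace ℝ (Fin n) × EuclideanSpace ℝ (Fin m)) → ℝ)
    (x : EuclideanSpace ℝ (Fin n)) (y : EuclideanSpace ℝ (Fin m)) :
    WithLp 2 (EuclideanSpace ℝ (Fin n) × EuclideanSpace ℝ (Fin m)) → ℝ :=
  fun zh =>
    taylorPoly p g (mkZ x y) zh
      + M * Real.sqrt 2 ^ (p - 1) / (Nat.factorial (p + 1) : ℝ)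
          * ‖(WithLp.equiv 2 (EuclideanSpace ℝ (Fin n) × EuclideanSpace ℝ (Fin m)) zh).1 - x‖ ^ (p + 1)
      - M * Real.sqrt 2 ^ (p - 1) / (Nat.factorial (p + 1) : ℝ)
          * ‖(WithLp.equiv 2 (EuclideanSpace ℝ (Fin n) × EuclideanSpace ℝ (Fin m)) zh).2 - y‖ ^ (p + 1)

section helpers
variable {E : Type*} [NormedAddCommGroup E] [NormedSpace ℝ E]

lemma aux_right (k : ℕ) (f : E → ℝ) (hf : ContDiff ℝ ((k + 1 : ℕ) : ℕ∞) f) (z : E)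
    (a : Fin (k + 1) → E) :
    iteratedFDeriv ℝ (k + 1) f z a =
      iteratedFDeriv ℝ k (fun w => fderiv ℝ f w (a (Fin.last k))) z (Fin.init a) := by
  rw [iteratedFDeriv_succ_apply_right]
  have h1 : ContDiff ℝ (k : ℕ∞) (fderiv ℝ f) :=
    hf.fderiv_right (by norm_cast)
  have h2 := (ContinuousLinearMap.apply ℝ ℝ (a (Fin.last k))).iteratedFDeriv_comp_left
    (h1.contDiffAt (x := z)) (i := k) (by norm_cast)
  have h3 : (fun w => fderiv ℝ f w (a (Fin.last k))) =
    (ContinuousLinearMap.apply ℝ ℝ (a (Fin.last k))) ∘ (fderiv ℝ f) := by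
    ext w; simp
  rw [h3, h2]
  simp

lemma aux_contDiff (k : ℕ) (f : E → ℝ) (hf : ContDiff ℝ ((k + 1 : ℕ) : ℕ∞) f) (v : E) :
    ContDiff ℝ (k : ℕ∞) (fun w => fderiv ℝ f w v) := by
  have h1 : ContDiff ℝ (k : ℕ∞) (fderiv ℝ f) :=
    hf.fderiv_right (by norm_cast)
  exact h1.clm_apply contDiff_const

lemma aux_symm (k : ℕ) : ∀ (f : E → ℝ) (_ : ContDiff ℝ ((k + 1 : ℕ) : ℕ∞) f) (z h v : E)
    (j : Fin (k + 1)),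
    iteratedFDeriv ℝ (k + 1) f z (Function.update (fun _ => h) j v) =
      iteratedFDeriv ℝ k (fun w => fderiv ℝ f w v) z (fun _ => h) := by
  induction k with
  | zero =>
    intro f hf z h v j
    have : j = Fin.last 0 := by fin_cases j; rfl
    subst this
    rw [aux_right 0 f hf]
    simp
  | succ k ih =>
    intro f hf z h v j
    rw [aux_right (k + 1) f hf]
    induction j using Fin.lastCases with
    | last =>
      simp only [Function.update_self, Fin.init_update_last]
      rfl
    | cast j =>
      rw [Fin.init_update_castSucc, Function.update_of_ne (Fin.castSucc_lt_last j).ne']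
      have e := ih (fun w => fderiv ℝ f w h) (aux_contDiff _ f hf h) z h v j
      refine Eq.trans e ?_
      rw [aux_right k (fun w => fderiv ℝ f w v) (aux_contDiff _ f hf v)]
      congr 2
      ext w
      have hd : Differentiable ℝ (fderiv ℝ f) := by
        have h1 : ContDiff ℝ ((k + 1 : ℕ) : ℕ∞) (fderiv ℝ f) :=
          hf.fderiv_right (by norm_cast)
        exact h1.differentiable (by simp)
      have hs : IsSymmSndFDerivAt ℝ f w :=
        (hf.contDiffAt (x := w)).isSymmSndFDerivAt (by
          simp only [minSmoothness_of_isRCLikeNormedField]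
          have h22 := (Nat.cast_le (α := WithTop ℕ∞)).2 (by omega : 2 ≤ k + 1 + 1)
          exact h22)
      rw [fderiv_clm_apply (hd w) (by fun_prop), fderiv_clm_apply (hd w) (by fun_prop)]
      simp
      exact hs v h

lemma aux_monomial (k : ℕ) (f : E → ℝ) (hf : ContDiff ℝ ((k + 1 : ℕ) : ℕ∞) f) (z w : E) :
    ∃ L : E →L[ℝ] ℝ, HasFDerivAt
      (fun u => (1 / ((k + 1).factorial : ℝ)) * iteratedFDeriv ℝ (k + 1) f z (fun _ => u - z)) L w ∧
      ∀ v, L v = ((k.factorial : ℝ)⁻¹) *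
        iteratedFDeriv ℝ k (fun w => fderiv ℝ f w v) z (fun _ => w - z) := by
  have h1 : HasFDerivAt (fun u => iteratedFDeriv ℝ (k + 1) f z (fun _ => u - z)) _ w :=
    HasFDerivAt.multilinear_comp (iteratedFDeriv ℝ (k + 1) f z)
      (g := fun _ u => u - z) (g' := fun _ => ContinuousLinearMap.id ℝ E) (x := w)
      (fun i => (hasFDerivAt_id w).sub_const z)
  refine ⟨_, h1.const_mul _, ?_⟩
  intro v
  have h2 : ∀ j : Fin (k + 1), iteratedFDeriv ℝ (k + 1) f z (Function.update (fun _ => w - z) j v) =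
      iteratedFDeriv ℝ k (fun w => fderiv ℝ f w v) z (fun _ => w - z) :=
    fun j => aux_symm k f hf z (w - z) v j
  simp [ContinuousMultilinearMap.toContinuousLinearMap, h2, Nat.factorial_succ]
  field_simp

lemma aux_taylor (p : ℕ) (f : E → ℝ) (hf : ContDiff ℝ (p : ℕ∞) f) (z w : E) :
    ∃ L : E →L[ℝ] ℝ, HasFDerivAt
      (fun u => ∑ i ∈ Finset.range (p + 1),
        (1 / (i.factorial : ℝ)) * iteratedFDeriv ℝ i f z (fun _ => u - z)) L w ∧
      ∀ v, L v = ∑ i ∈ Finset.range p, ((i.factorial : ℝ)⁻¹) *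
        iteratedFDeriv ℝ i (fun w => fderiv ℝ f w v) z (fun _ => w - z) := by
  induction p with
  | zero =>
    refine ⟨0, ?_, by simp⟩
    simp only [zero_add, Finset.sum_range_one, iteratedFDeriv_zero_apply]
    exact hasFDerivAt_const _ _
  | succ p ih =>
    obtain ⟨L, hL, hL'⟩ := ih (hf.of_le (by norm_cast; omega))
    obtain ⟨L2, h2, h2'⟩ := aux_monomial p f hf z w
    refine ⟨L + L2, ?_, ?_⟩
    · simp_rw [Finset.sum_range_succ _ (p + 1)]
      exact hL.add h2
    · intro v
      rw [Finset.sum_range_succ, ← hL', ← h2']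
      rfl

lemma aux_rem (n : ℕ) (f : E → ℝ) (hf : ContDiff ℝ ((n + 1 : ℕ) : ℕ∞) f) (z h : E) (K : ℝ)
    (hK : ∀ t ∈ Set.Icc (0 : ℝ) 1, |iteratedFDeriv ℝ (n + 1) f (z + t • h) (fun _ => h)
      - iteratedFDeriv ℝ (n + 1) f z (fun _ => h)| ≤ K) :
    |f (z + h) - ∑ k ∈ Finset.range (n + 2), (k.factorial : ℝ)⁻¹ *
      iteratedFDeriv ℝ k f z (fun _ => h)| ≤ K := by
  have hK0 : 0 ≤ K := (abs_nonneg _).trans (hK 0 (by simp))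
  have h1 := map_add_eq_sum_add_integral_iteratedFDeriv (f := f) (x := z) (y := h) (n := n)
    (fun t _ => by exact_mod_cast hf.contDiffAt)
  have hc : Continuous (fun t : ℝ => iteratedFDeriv ℝ (n + 1) f (z + t • h) (fun _ => h)) := by
    have : Continuous (iteratedFDeriv ℝ (n + 1) f) :=
      hf.continuous_iteratedFDeriv (by norm_cast)
    have h2 : Continuous (fun t : ℝ => iteratedFDeriv ℝ (n + 1) f (z + t • h)) :=
      this.comp (by fun_prop)
    fun_prop
  have hi : ∫ t in (0 : ℝ)..1, (1 - t) ^ n = 1 / ((n : ℝ) + 1) := by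
    rw [intervalIntegral.integral_comp_sub_left (fun t => t ^ n) 1]
    simp
  have h3 : f (z + h) - ∑ k ∈ Finset.range (n + 2), (k.factorial : ℝ)⁻¹ *
      iteratedFDeriv ℝ k f z (fun _ => h) = (n.factorial : ℝ)⁻¹ *
      ∫ t in (0 : ℝ)..1, (1 - t) ^ n * (iteratedFDeriv ℝ (n + 1) f (z + t • h) (fun _ => h)
      - iteratedFDeriv ℝ (n + 1) f z (fun _ => h)) := by
    simp_rw [mul_sub]
    rw [intervalIntegral.integral_sub (Continuous.intervalIntegrable (by fun_prop) _ _)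
      (Continuous.intervalIntegrable (by fun_prop) _ _), intervalIntegral.integral_mul_const, hi, h1,
      Finset.sum_range_succ _ (n + 1), Nat.factorial_succ]
    simp only [smul_eq_mul]
    push_cast
    field_simp
    ring
  rw [h3, abs_mul]
  have h4 := intervalIntegral.norm_integral_le_of_norm_le_const (a := (0 : ℝ)) (b := 1) (C := K)
    (f := fun t => (1 - t) ^ n * (iteratedFDeriv ℝ (n + 1) f (z + t • h) (fun _ => h)
      - iteratedFDeriv ℝ (n + 1) f z (fun _ => h))) (by
    intro t ht
    rw [Set.uIoc_of_le zero_le_one] at ht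
    rw [norm_mul, Real.norm_eq_abs, Real.norm_eq_abs, abs_pow, abs_of_nonneg (by linarith [ht.2])]
    have := hK t ⟨ht.1.le, ht.2⟩
    have h5 : (1 - t) ^ n ≤ 1 := pow_le_one₀ (by linarith [ht.2]) (by linarith [ht.1])
    calc _ ≤ 1 * K := by gcongr
      _ = K := one_mul K)
  simp only [sub_zero, abs_one, mul_one, Real.norm_eq_abs] at h4
  have h6 : |(n.factorial : ℝ)⁻¹| ≤ 1 := by
    rw [abs_of_nonneg (by positivity)]
    exact inv_le_one_of_one_le₀ (by exact_mod_cast Nat.one_le_iff_ne_zero.2 n.factorial_ne_zero)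
  calc _ ≤ 1 * K := by gcongr
    _ = K := one_mul K

lemma aux_grad (p : ℕ) (hp : 2 ≤ p) (f : E → ℝ) (hf : ContDiff ℝ (p : ℕ∞) f) (C : ℝ) (hC : 0 ≤ C)
    (hLip : ∀ z₁ z₂, ‖iteratedFDeriv ℝ p f z₁ - iteratedFDeriv ℝ p f z₂‖ ≤ C * ‖z₁ - z₂‖)
    (z w v : E) :
    |fderiv ℝ f w v - ∑ i ∈ Finset.range p, ((i.factorial : ℝ)⁻¹) *
        iteratedFDeriv ℝ i (fun w => fderiv ℝ f w v) z (fun _ => w - z)|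
      ≤ C * ‖w - z‖ ^ p * ‖v‖ := by
  obtain ⟨n, rfl⟩ := Nat.exists_eq_add_of_le' hp
  have h1 := aux_rem n (fun w => fderiv ℝ f w v) (aux_contDiff _ f hf v) z (w - z)
    (C * ‖w - z‖ ^ (n + 2) * ‖v‖) ?_
  · simpa using h1
  intro t ht
  rw [← aux_symm (n + 1) f hf _ _ _ (Fin.last _), ← aux_symm (n + 1) f hf _ _ _ (Fin.last _),
    ← sub_apply, ← Real.norm_eq_abs]
  refine (ContinuousMultilinearMap.le_opNorm _ _).trans ?_
  have h2 : ∏ i : Fin (n + 1 + 1), ‖(Function.update (fun _ => w - z) (Fin.last (n + 1)) v : Fin (n + 1 + 1) → E) i‖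
      = ‖w - z‖ ^ (n + 1) * ‖v‖ := by
    rw [Fin.prod_univ_castSucc]
    simp
  rw [h2]
  have h3 := hLip (z + t • (w - z)) z
  rw [add_sub_cancel_left, norm_smul, Real.norm_eq_abs, abs_of_nonneg ht.1] at h3
  have h4 : C * (t * ‖w - z‖) ≤ C * (1 * ‖w - z‖) := by
    gcongr; exact ht.2
  calc _ ≤ (C * (1 * ‖w - z‖)) * (‖w - z‖ ^ (n + 1) * ‖v‖) := by
        gcongr
        exact h3.trans h4
    _ = _ := by ring

lemma aux_norm {F : Type*} [NormedAddCommGroup F] [InnerProductSpace ℝ F] (p : ℕ) (hp : 2 ≤ p)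
    (A : E →L[ℝ] F) (x : F) (w : E) :
    ∃ L : E →L[ℝ] ℝ, HasFDerivAt (fun u => ‖A u - x‖ ^ (p + 1)) L w ∧
      ∀ v, |L v| ≤ (p + 1) * ‖A w - x‖ ^ p * ‖A v‖ := by
  have hp' : (1 : ℝ) < ((p + 1 : ℕ) : ℝ) := by norm_cast; omega
  have h1 := (hasFDerivAt_norm_rpow (A w - x) hp').comp w ((A.hasFDerivAt (x := w)).sub_const x)
  refine ⟨_, h1.congr_of_eventuallyEq (Filter.Eventually.of_forall ?_), ?_⟩
  · intro u
    simp only [Function.comp, Real.rpow_natCast]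
  · intro v
    have e : (((p + 1 : ℕ) : ℝ) - 2) = ((p - 1 : ℕ) : ℝ) := by
      rw [Nat.cast_sub (by omega)]; push_cast; ring
    rw [e, Real.rpow_natCast]
    simp only [ContinuousLinearMap.comp_apply, smul_apply, smul_eq_mul,
      innerSL_apply_apply]
    rw [abs_mul, abs_of_nonneg (by positivity)]
    have := abs_real_inner_le_norm (A w - x) (A v)
    calc _ ≤ ((p + 1 : ℕ) : ℝ) * ‖A w - x‖ ^ (p - 1) * (‖A w - x‖ * ‖A v‖) := by gcongr
      _ = ((p + 1 : ℕ) : ℝ) * ‖A w - x‖ ^ (p - 1 + 1) * ‖A v‖ := by ring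
      _ = _ := by rw [Nat.sub_add_cancel (by omega)]; push_cast; ring

lemma aux_grad_zero {H : Type*} [NormedAddCommGroup H] [InnerProductSpace ℝ H] [CompleteSpace H]
    {f : H → ℝ} {z : H} {L : H →L[ℝ] ℝ} (h : HasFDerivAt f L z) (h0 : gradient f z = 0) :
    L = 0 := by
  rw [← h.fderiv]
  simpa [gradient] using h0

lemma aux_grad_norm {H : Type*} [NormedAddCommGroup H] [InnerProductSpace ℝ H] [CompleteSpace H]
    {f : H → ℝ} {z : H} : ‖gradient f z‖ = ‖fderiv ℝ f z‖ := by
  simp [gradient]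

lemma aux_comb {L L1 L2 : E →L[ℝ] ℝ} {c : ℝ} (h : L + c • L1 - c • L2 = 0) (v : E) :
    L v = c * L2 v - c * L1 v := by
  have := congrArg (fun T => T v) h
  simp at this
  linarith

end helpers

set_option maxHeartbeats 1000000 in
/-- Inequality (17) in the paper's saddle-point version of Lemma 5.2: at a stationary point
`(x̃,ỹ)` of the regularized Taylor model `Ω_{(x,y),p,M}` with `M ≥ L_p`, the gradient of `g`
satisfies `‖∇g(x̃,ỹ)‖² ≤ 2^{p+1} M² (‖x̃ − x‖² + ‖ỹ − y‖²)^p`. -/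
theorem gradient_bound_at_model_stationary_point {n m : ℕ} (p : ℕ) (hp : 2 ≤ p)
    (Lp M : ℝ) (hLp : 0 < Lp) (hM : Lp ≤ M)
    (g : WithLp 2 (EuclideanSpace ℝ (Fin n) × EuclideanSpace ℝ (Fin m)) → ℝ)
    (hg : ContDiff ℝ (p : ℕ∞) g)
    (hLip : ∀ z₁ z₂, ‖iteratedFDeriv ℝ p g z₁ - iteratedFDeriv ℝ p g z₂‖ ≤ Lp * ‖z₁ - z₂‖)
    (x xt : EuclideanSpace ℝ (Fin n)) (y yt : EuclideanSpace ℝ (Fin m))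
    (hstat : gradient (omegaModel p M g x y) (mkZ xt yt) = 0) :
    ‖gradient g (mkZ xt yt)‖ ^ 2
      ≤ 2 ^ (p + 1) * M ^ 2 * (‖xt - x‖ ^ 2 + ‖yt - y‖ ^ 2) ^ p := by
  have hΦ := aux_taylor p g hg (mkZ x y) (mkZ xt yt)
  obtain ⟨L, hL, hLv⟩ := hΦ
  obtain ⟨L1, h1, h1v⟩ := aux_norm p hp
    (WithLp.fstL 2 ℝ (EuclideanSpace ℝ (Fin n)) (EuclideanSpace ℝ (Fin m))) x (mkZ xt yt)
  obtain ⟨L2, h2, h2v⟩ := aux_norm p hp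
    (WithLp.sndL 2 ℝ (EuclideanSpace ℝ (Fin n)) (EuclideanSpace ℝ (Fin m))) y (mkZ xt yt)
  set c : ℝ := M * Real.sqrt 2 ^ (p - 1) / (Nat.factorial (p + 1) : ℝ) with hc
  have hM0 : 0 < M := hLp.trans_le hM
  have hc0 : 0 ≤ c := by positivity
  have hΩ : HasFDerivAt (omegaModel p M g x y) (L + c • L1 - c • L2) (mkZ xt yt) :=
    (hL.add (h1.const_mul c)).sub (h2.const_mul c)
  have h0 : L + c • L1 - c • L2 = 0 := aux_grad_zero hΩ hstat
  set r := ‖mkZ xt yt - mkZ x y‖ with hr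
  have hr2 : r ^ 2 = ‖xt - x‖ ^ 2 + ‖yt - y‖ ^ 2 := by
    rw [hr, WithLp.prod_norm_sq_eq_of_L2]; rfl
  have hr0 : 0 ≤ r := norm_nonneg _
  have ha : ‖xt - x‖ ≤ r := by
    apply le_of_sq_le_sq _ hr0
    nlinarith [sq_nonneg ‖yt - y‖]
  have hb : ‖yt - y‖ ≤ r := by
    apply le_of_sq_le_sq _ hr0
    nlinarith [sq_nonneg ‖xt - x‖]
  set s := Real.sqrt 2 ^ (p - 1) with hs
  have hs1 : 1 ≤ s := one_le_pow₀ (by simp)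
  have hs2 : 4 * s ^ 2 = 2 ^ (p + 1) := by
    obtain ⟨k, rfl⟩ := Nat.exists_eq_add_of_le' hp
    rw [hs, ← pow_mul, mul_comm _ 2, pow_mul, Real.sq_sqrt (by norm_num)]
    rw [show k + 2 - 1 = k + 1 by omega]
    ring
  have hcs : c * (p + 1) ≤ M * s / 2 := by
    have h2p : (2 : ℝ) ≤ (p.factorial : ℝ) := by
      exact_mod_cast hp.trans p.self_le_factorial
    rw [hc, Nat.factorial_succ]
    push_cast
    rw [div_mul_eq_mul_div, div_le_div_iff₀ (by positivity) (by norm_num)]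
    have : 0 ≤ M * s * (p + 1) := by positivity
    nlinarith
  have hbound : ‖fderiv ℝ g (mkZ xt yt)‖ ≤ 2 * s * M * r ^ p := by
    refine ContinuousLinearMap.opNorm_le_bound _ (by positivity) ?_
    intro v
    have t1 := aux_grad p hp g hg Lp hLp.le hLip (mkZ x y) (mkZ xt yt) v
    rw [← hLv, ← hr] at t1
    have t2 : L v = c * L2 v - c * L1 v := aux_comb h0 v
    have hv1 : ‖v.fst‖ ≤ ‖v‖ := by
      apply le_of_sq_le_sq _ (norm_nonneg _)
      rw [WithLp.prod_norm_sq_eq_of_L2]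
      nlinarith [sq_nonneg ‖v.snd‖]
    have hv2 : ‖v.snd‖ ≤ ‖v‖ := by
      apply le_of_sq_le_sq _ (norm_nonneg _)
      rw [WithLp.prod_norm_sq_eq_of_L2]
      nlinarith [sq_nonneg ‖v.fst‖]
    have t3 : |L1 v| ≤ (p + 1) * r ^ p * ‖v‖ := by
      refine (h1v v).trans ?_
      change ((p : ℝ) + 1) * ‖xt - x‖ ^ p * ‖v.fst‖ ≤ _
      gcongr
    have t4 : |L2 v| ≤ (p + 1) * r ^ p * ‖v‖ := by
      refine (h2v v).trans ?_
      change ((p : ℝ) + 1) * ‖yt - y‖ ^ p * ‖v.snd‖ ≤ _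
      gcongr
    have t5 : |L v| ≤ c * ((p + 1) * r ^ p * ‖v‖) + c * ((p + 1) * r ^ p * ‖v‖) := by
      rw [t2]
      refine (abs_sub _ _).trans ?_
      rw [abs_mul, abs_mul, abs_of_nonneg hc0]
      gcongr
    have hq : 0 ≤ r ^ p * ‖v‖ := by positivity
    have t6 : |fderiv ℝ g (mkZ xt yt) v| ≤ Lp * r ^ p * ‖v‖ + |L v| := by
      have := abs_add_le (fderiv ℝ g (mkZ xt yt) v - L v) (L v)
      rw [sub_add_cancel] at this
      linarith
    rw [Real.norm_eq_abs]
    have t7 : c * (p + 1) * (r ^ p * ‖v‖) ≤ M * s / 2 * (r ^ p * ‖v‖) := by gcongr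
    have t8 : Lp * (r ^ p * ‖v‖) ≤ M * s * (r ^ p * ‖v‖) := by
      gcongr
      nlinarith
    nlinarith
  have hgr : ‖gradient g (mkZ xt yt)‖ = ‖fderiv ℝ g (mkZ xt yt)‖ := aux_grad_norm
  rw [hgr, ← hr2, ← hs2]
  calc _ ≤ (2 * s * M * r ^ p) ^ 2 := by gcongr
    _ = _ := by ring
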